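/- For every n ≥ 1, the total number of partitions of n having a fixed point equals the number of partitions of n whose mex is even. -/

import Mathlib

/-- The `d`-th largest part of a partition (1-indexed); `0` if the index is out of range. -/
def nthPart {n : ℕ} (p : n.Partition) (d : ℕ) : ℕ :=
  (p.parts.sort (· ≥ ·)).getD (d - 1) 0

/-- `f n d` is the number of partitions of `n` with fixed point `d`,
i.e. whose `d`-th largest part equals `d`. -/
noncomputable def f (n d : ℕ) : ℕ :=
  Nat.card {p : n.Partition // nthPart p d = d}
/-- The mex (minimal excludant) of a partition: the smallest positive integer
that is not a part. -/
noncomputable def mex {n : ℕ} (p : n.Partition) : ℕ :=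
  sInf {k : ℕ | 0 < k ∧ k ∉ p.parts}

/-!
Say that a partition `λ` has a `j`-shifted fixed point if `λ_i = i + j` for some `i`, let `F_j(n)`
be the number of such partitions of `n`, and put `T_j = 1 + ⋯ + j`. Discard the part `λ_i = i + j`
of a partition of `n + j + 1` and add `1` to each of the `i - 1` parts before it. This leaves a
partition `μ` of `n` in which `μ_k - k` jumps from at least `j + 2` to at most `j` as `k` passes
from `i - 1` to `i`. As `μ_k - k` is strictly decreasing in `k`, such a jump occurs exactly when
`μ` has no `(j + 1)`-shifted fixed point, and its place determines `i`. Hence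
`F_j(n + j + 1) + F_{j+1}(n) = p(n)`.

A partition has mex greater than `j` iff it contains the staircase `1, …, j`, so `p(n)` partitions
of `n + T_j` have that property. Let `G_j(n)` be the number of partitions of `n + T_j` whose mex
exceeds `j` and has the parity of `j`. As `n + j + 1 + T_j = n + T_{j+1}`, splitting the partitions
of this number with mex greater than `j + 1` by the parity of the mex gives
`G_j(n + j + 1) + G_{j+1}(n) = p(n)`. Both `F_j(n)` and `G_j(n)` vanish for `n ≤ j`, so `F = G`, and
`F_0 = G_0` is the claim.
-/

section OrderedMultisets

variable {α : Type*}

theorem le_getD_iff_lt_countP [Preorder α] [DecidableLE α] {l : List α}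
    (hl : l.Pairwise (· ≥ ·)) {k d : α} (hd : ¬ k ≤ d) (i : ℕ) :
    k ≤ l.getD i d ↔ i < l.countP (k ≤ ·) := by
  induction l generalizing i with
  | nil => simpa using hd
  | cons a l ih =>
    obtain ⟨ha, hl⟩ := List.pairwise_cons.1 hl
    by_cases hk : k ≤ a
    · cases i with
      | zero => simp [hk]
      | succ i => simpa [hk] using ih hl i
    · have hzero : l.countP (k ≤ ·) = 0 :=
        List.countP_eq_zero.2 fun b hb => by simpa using fun h => hk (h.trans (ha b hb))
      cases i with
      | zero => simp [hk, hzero]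
      | succ i => simpa [hk, hzero] using ih hl i

variable [LinearOrder α]

theorem filter_lt_add_replicate_count_add_filter_gt (s : Multiset α) (t : α) :
    s.filter (t < ·) + .replicate (s.count t) t + s.filter (· < t) = s := by
  ext x
  rcases lt_trichotomy x t with h | rfl | h
  · simp [Multiset.count_replicate, h, h.ne', h.not_gt]
  · simp
  · simp [Multiset.count_replicate, h, h.ne, h.not_gt]

theorem countP_le_eq_countP_lt_add_count (s : Multiset α) (t : α) :
    s.countP (t ≤ ·) = s.countP (t < ·) + s.count t := by
  have hgt : (s.filter (t < ·)).countP (t ≤ ·) = s.countP (t < ·) := by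
    rw [Multiset.countP_eq_card_filter (t < ·), Multiset.countP_eq_card]
    exact fun a ha => (Multiset.mem_filter.1 ha).2.le
  have heq : (Multiset.replicate (s.count t) t).countP (t ≤ ·) = s.count t := by
    rw [Multiset.countP_eq_card.2 fun b hb => (Multiset.eq_of_mem_replicate hb).ge,
      Multiset.card_replicate]
  have hlt : (s.filter (· < t)).countP (t ≤ ·) = 0 :=
    Multiset.countP_eq_zero.2 fun b hb => (Multiset.mem_filter.1 hb).2.not_ge
  conv_lhs => rw [← filter_lt_add_replicate_count_add_filter_gt s t]
  rw [Multiset.countP_add, Multiset.countP_add, hgt, heq, hlt, add_zero]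

/-- The bounds on `m` say that `t` is the `(m + 1)`-st largest element of `s`. -/
theorem exists_add_cons_eq {s : Multiset α} {t : α} {m : ℕ} (hlt : s.countP (t < ·) ≤ m)
    (hle : m < s.countP (t ≤ ·)) :
    ∃ A B : Multiset α, A + t ::ₘ B = s ∧ A.card = m ∧ (∀ a ∈ A, t ≤ a) ∧ ∀ b ∈ B, b ≤ t := by
  obtain ⟨k, hk⟩ := Nat.exists_eq_add_of_le hlt
  have hcount := countP_le_eq_countP_lt_add_count s t
  obtain ⟨l, hl⟩ : ∃ l, s.count t = k + (l + 1) := ⟨s.count t - k - 1, by omega⟩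
  refine ⟨s.filter (t < ·) + .replicate k t, .replicate l t + s.filter (· < t), ?_, ?_, ?_, ?_⟩
  · rw [← Multiset.cons_add, ← Multiset.replicate_succ, ← add_assoc, add_assoc (s.filter _),
      ← Multiset.replicate_add, ← hl, filter_lt_add_replicate_count_add_filter_gt]
  · rw [Multiset.card_add, Multiset.card_replicate, ← Multiset.countP_eq_card_filter, hk]
  · simp only [Multiset.mem_add, Multiset.mem_filter, Multiset.mem_replicate]
    rintro a (⟨-, h⟩ | ⟨-, rfl⟩)
    exacts [h.le, le_rfl]
  · simp only [Multiset.mem_add, Multiset.mem_filter, Multiset.mem_replicate]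
    rintro b (⟨-, rfl⟩ | ⟨-, h⟩)
    exacts [le_rfl, h.le]

theorem eq_filter_lt_add_replicate {A B : Multiset α} {t : α} (hA : ∀ a ∈ A, t ≤ a)
    (hB : ∀ b ∈ B, b ≤ t) :
    A = (A + B).filter (t < ·) +
      .replicate (A.card - ((A + B).filter (t < ·)).card) t := by
  have hfilter : (A + B).filter (t < ·) = A.filter (t < ·) := by
    rw [Multiset.filter_add, Multiset.filter_eq_nil.2 fun b hb => (hB b hb).not_gt, add_zero]
  have hrest : A.filter (¬ t < ·) = .replicate (A.filter (¬ t < ·)).card t :=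
    Multiset.eq_replicate_card.2 fun a ha =>
      have ⟨ha, hta⟩ := Multiset.mem_filter.1 ha
      (not_lt.1 hta).antisymm (hA a ha)
  have hsplit := Multiset.filter_add_not (t < ·) A
  have hcard := congrArg Multiset.card hsplit
  rw [Multiset.card_add] at hcard
  rw [hfilter, ← hcard, Nat.add_sub_cancel_left, ← hrest, hsplit]

theorem eq_and_eq_of_add_eq_add {A B A' B' : Multiset α} {t : α}
    (hA : ∀ a ∈ A, t ≤ a) (hB : ∀ b ∈ B, b ≤ t) (hA' : ∀ a ∈ A', t ≤ a) (hB' : ∀ b ∈ B', b ≤ t)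
    (hcard : A.card = A'.card) (h : A + B = A' + B') : A = A' ∧ B = B' := by
  have hupper : A = A' := by
    rw [eq_filter_lt_add_replicate hA hB, eq_filter_lt_add_replicate hA' hB', h, hcard]
  subst hupper
  exact ⟨rfl, add_left_cancel h⟩

end OrderedMultisets

section ConjugateParts

/-- The number of parts of `p` that are at least `k`, i.e. the `k`-th part (1-indexed) of the
conjugate partition. It describes `nthPart` without sorting the parts. -/
def conjPart {n : ℕ} (p : n.Partition) (k : ℕ) : ℕ :=
  p.parts.countP (k ≤ ·)

/-- Some part of `p` exceeds its (1-indexed) position by exactly `j`; for `j = 0` this is a fixed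
point. -/
def HasShiftedFixedPoint (j : ℕ) {n : ℕ} (p : n.Partition) : Prop :=
  ∃ i, 1 ≤ i ∧ nthPart p i = i + j

variable {n : ℕ} (p : n.Partition) {j : ℕ}

theorem conjPart_antitone : Antitone (conjPart p) := fun a b hab => by
  simp only [conjPart, Multiset.countP_eq_card_filter]
  exact Multiset.card_le_card (Multiset.monotone_filter_right _ fun _ h => hab.trans h)

theorem le_nthPart_iff_le_conjPart {i k : ℕ} (hi : 0 < i) (hk : 0 < k) :
    k ≤ nthPart p i ↔ i ≤ conjPart p k := by
  have hcount : (p.parts.sort (· ≥ ·)).countP (k ≤ ·) = conjPart p k := by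
    rw [conjPart, ← Multiset.coe_countP, Multiset.sort_eq]
  rw [nthPart, le_getD_iff_lt_countP (Multiset.pairwise_sort _ _) hk.not_ge, hcount]
  omega

theorem hasShiftedFixedPoint_iff_conjPart :
    HasShiftedFixedPoint j p ↔ ∃ t, conjPart p (t + 1) + j < t ∧ t ≤ conjPart p t + j := by
  constructor
  · rintro ⟨i, hi, h⟩
    have hle := le_nthPart_iff_le_conjPart p hi (k := i + j) (by omega)
    have hlt := le_nthPart_iff_le_conjPart p hi (k := i + j + 1) (by omega)
    exact ⟨i + j, by omega, by omega⟩
  · rintro ⟨t, hlt, hle⟩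
    have hle' := le_nthPart_iff_le_conjPart p (i := t - j) (k := t) (by omega) (by omega)
    have hlt' := le_nthPart_iff_le_conjPart p (i := t - j) (k := t + 1) (by omega) (by omega)
    exact ⟨t - j, by omega, by omega⟩

theorem not_hasShiftedFixedPoint_iff_conjPart :
    ¬ HasShiftedFixedPoint j p ↔ ∃ t, conjPart p (t + 1) + j = t := by
  rw [hasShiftedFixedPoint_iff_conjPart]
  constructor
  · intro hnot
    have hex : ∃ t, conjPart p (t + 1) + j ≤ t :=
      ⟨conjPart p 0 + j, Nat.add_le_add_right (conjPart_antitone p (Nat.zero_le _)) j⟩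
    obtain ⟨t, ht, hmin⟩ : ∃ t, conjPart p (t + 1) + j ≤ t ∧
        ∀ u < t, u < conjPart p (u + 1) + j :=
      ⟨Nat.find hex, Nat.find_spec hex, fun u hu => not_le.1 (Nat.find_min hex hu)⟩
    refine ⟨t, ht.eq_of_not_lt fun hlt => hnot ⟨t, hlt, ?_⟩⟩
    have hpred := hmin (t - 1) (by omega)
    rw [Nat.sub_add_cancel (by omega)] at hpred
    omega
  · rintro ⟨t, ht⟩ ⟨u, hlt, hle⟩
    rcases le_or_gt u t with hut | htu
    · have := conjPart_antitone p (Nat.add_le_add_right hut 1)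
      omega
    · have : conjPart p u ≤ conjPart p (t + 1) := conjPart_antitone p (Nat.succ_le_iff.2 htu)
      omega

theorem not_hasShiftedFixedPoint_of_le (h : n ≤ j) : ¬ HasShiftedFixedPoint j p := by
  refine (not_hasShiftedFixedPoint_iff_conjPart p).2 ⟨j, Nat.add_eq_right.2 ?_⟩
  exact Multiset.countP_eq_zero.2 fun a ha => by
    have := Nat.Partition.le_of_mem_parts ha
    omega

theorem eq_of_conjPart_add_eq {t u : ℕ} (ht : conjPart p (t + 1) + j = t)
    (hu : conjPart p (u + 1) + j = u) : t = u := by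
  have hanti := conjPart_antitone p
  rcases le_total t u with h | h
  all_goals
    have := hanti (Nat.add_le_add_right h 1)
    omega

theorem eq_of_conjPart_lt_of_le_conjPart {t u : ℕ}
    (ht : conjPart p (t + 1) + j < t ∧ t ≤ conjPart p t + j)
    (hu : conjPart p (u + 1) + j < u ∧ u ≤ conjPart p u + j) : t = u := by
  have hanti := conjPart_antitone p
  rcases lt_trichotomy t u with h | h | h
  · have : conjPart p u ≤ conjPart p (t + 1) := hanti h
    omega
  · exact h
  · have : conjPart p t ≤ conjPart p (u + 1) := hanti h
    omega

end ConjugateParts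

/-- A partition of `n + j + 1` cut at a `j`-shifted fixed point: `pivot` is the part `i + j` in
position `i`, `upper` holds the `i - 1` parts before it and `lower` the parts after it. The position
is recorded as `upper.card + 1`. -/
@[ext]
structure ShiftedSplit (j n : ℕ) where
  upper : Multiset ℕ
  pivot : ℕ
  lower : Multiset ℕ
  pivot_eq : pivot = upper.card + 1 + j
  pivot_le : ∀ a ∈ upper, pivot ≤ a
  le_pivot : ∀ b ∈ lower, b ≤ pivot
  lower_pos : ∀ b ∈ lower, 0 < b
  sum_eq : upper.sum + (pivot + lower.sum) = n + j + 1

namespace ShiftedSplit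

variable {j n : ℕ} (S : ShiftedSplit j n)

theorem pivot_pos : 0 < S.pivot := by
  rw [S.pivot_eq]
  omega

/-- The partition that was cut. -/
def glue : (n + j + 1).Partition where
  parts := S.upper + S.pivot ::ₘ S.lower
  parts_pos {a} ha := by
    rcases Multiset.mem_add.1 ha with ha | ha
    · exact S.pivot_pos.trans_le (S.pivot_le a ha)
    · rcases Multiset.mem_cons.1 ha with rfl | ha
      · exact S.pivot_pos
      · exact S.lower_pos a ha
  parts_sum := by rw [Multiset.sum_add, Multiset.sum_cons, S.sum_eq]

/-- The partition obtained by discarding the pivot and adding `1` to each part before it. -/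
def raise : n.Partition where
  parts := S.upper.map (· + 1) + S.lower
  parts_pos {a} ha := by
    rcases Multiset.mem_add.1 ha with ha | ha
    · obtain ⟨b, -, rfl⟩ := Multiset.mem_map.1 ha
      exact b.succ_pos
    · exact S.lower_pos a ha
  parts_sum := by
    have hpivot := S.pivot_eq
    have hsum := S.sum_eq
    simp only [Multiset.sum_add, Multiset.sum_map_add, Multiset.map_id', Multiset.map_const',
      Multiset.sum_replicate, smul_eq_mul, mul_one]
    omega

theorem countP_lower_eq_zero : S.lower.countP (S.pivot + 1 ≤ ·) = 0 :=
  Multiset.countP_eq_zero.2 fun b hb => (Nat.lt_succ_of_le (S.le_pivot b hb)).not_ge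

theorem conjPart_glue_pivot :
    conjPart S.glue (S.pivot + 1) + j < S.pivot ∧ S.pivot ≤ conjPart S.glue S.pivot + j := by
  have hle : S.upper.countP (S.pivot + 1 ≤ ·) ≤ S.upper.card := Multiset.countP_le_card _ _
  have hupper : S.upper.countP (S.pivot ≤ ·) = S.upper.card :=
    Multiset.countP_eq_card.2 S.pivot_le
  have hpivot := S.pivot_eq
  constructor
  · rw [conjPart, glue, Multiset.countP_add, Multiset.countP_cons_of_neg _ (by simp),
      S.countP_lower_eq_zero]
    omega
  · rw [conjPart, glue, Multiset.countP_add, Multiset.countP_cons_of_pos _ le_rfl, hupper]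
    omega

theorem conjPart_raise_pivot : conjPart S.raise (S.pivot + 1) + (j + 1) = S.pivot := by
  have hupper : (S.upper.map (· + 1)).countP (S.pivot + 1 ≤ ·) = S.upper.card := by
    rw [← Multiset.card_map (· + 1) S.upper, Multiset.countP_eq_card]
    simpa using S.pivot_le
  rw [conjPart, raise, Multiset.countP_add, hupper, S.countP_lower_eq_zero, S.pivot_eq]
  ring

theorem glue_injective : Function.Injective (glue (j := j) (n := n)) := by
  intro S S' h
  have hpivot : S.pivot = S'.pivot := eq_of_conjPart_lt_of_le_conjPart S.glue
    S.conjPart_glue_pivot (h ▸ S'.conjPart_glue_pivot)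
  have hcard : S.upper.card = S'.upper.card := by
    simpa [S.pivot_eq, S'.pivot_eq] using hpivot
  have hparts : S.upper + S.pivot ::ₘ S.lower = S'.upper + S'.pivot ::ₘ S'.lower :=
    congrArg Nat.Partition.parts h
  simp only [hpivot, Multiset.add_cons, Multiset.cons_inj_right] at hparts
  obtain ⟨hupper, hlower⟩ := eq_and_eq_of_add_eq_add S.pivot_le S.le_pivot
    (hpivot ▸ S'.pivot_le) (hpivot ▸ S'.le_pivot) hcard hparts
  exact ShiftedSplit.ext hupper hpivot hlower

theorem raise_injective : Function.Injective (raise (j := j) (n := n)) := by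
  intro S S' h
  have hpivot : S.pivot = S'.pivot := eq_of_conjPart_add_eq S.raise
    S.conjPart_raise_pivot (h ▸ S'.conjPart_raise_pivot)
  have hcard : S.upper.card = S'.upper.card := by
    simpa [S.pivot_eq, S'.pivot_eq] using hpivot
  have pivot_le_raised (T : ShiftedSplit j n) : ∀ a ∈ T.upper.map (· + 1), T.pivot ≤ a := by
    intro a ha
    obtain ⟨b, hb, rfl⟩ := Multiset.mem_map.1 ha
    exact (T.pivot_le b hb).trans b.le_succ
  obtain ⟨hupper, hlower⟩ := eq_and_eq_of_add_eq_add (pivot_le_raised S) S.le_pivot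
    (hpivot ▸ pivot_le_raised S') (hpivot ▸ S'.le_pivot) (by simpa using hcard)
    (congrArg Nat.Partition.parts h)
  exact ShiftedSplit.ext (Multiset.map_injective (add_left_injective 1) hupper) hpivot hlower

theorem hasShiftedFixedPoint_glue : HasShiftedFixedPoint j S.glue :=
  (hasShiftedFixedPoint_iff_conjPart _).2 ⟨S.pivot, S.conjPart_glue_pivot⟩

theorem not_hasShiftedFixedPoint_raise : ¬ HasShiftedFixedPoint (j + 1) S.raise :=
  (not_hasShiftedFixedPoint_iff_conjPart _).2 ⟨S.pivot, S.conjPart_raise_pivot⟩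

theorem exists_glue_eq {p : (n + j + 1).Partition} (hp : HasShiftedFixedPoint j p) :
    ∃ S : ShiftedSplit j n, S.glue = p := by
  obtain ⟨t, hlt, hle⟩ := (hasShiftedFixedPoint_iff_conjPart p).1 hp
  have hlt' : p.parts.countP (t < ·) + j < t := hlt
  have hle' : t ≤ p.parts.countP (t ≤ ·) + j := hle
  obtain ⟨A, B, hparts, hcard, hA, hB⟩ :=
    exists_add_cons_eq (s := p.parts) (t := t) (m := t - j - 1) (by omega) (by omega)
  have hlower : ∀ b ∈ B, b ∈ p.parts := fun b hb => by simp [← hparts, hb]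
  refine ⟨⟨A, t, B, by omega, hA, hB, fun b hb => p.parts_pos (hlower b hb), ?_⟩,
    Nat.Partition.ext hparts⟩
  rw [← Multiset.sum_cons, ← Multiset.sum_add, hparts, p.parts_sum]

theorem exists_raise_eq {p : n.Partition} (hp : ¬ HasShiftedFixedPoint (j + 1) p) :
    ∃ S : ShiftedSplit j n, S.raise = p := by
  obtain ⟨t, ht⟩ := (not_hasShiftedFixedPoint_iff_conjPart p).1 hp
  have hmap : ((p.parts.filter (t + 1 ≤ ·)).map (· - 1)).map (· + 1) =
      p.parts.filter (t + 1 ≤ ·) := by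
    rw [Multiset.map_map]
    refine (Multiset.map_congr rfl fun x hx => ?_).trans (Multiset.map_id' _)
    exact Nat.sub_add_cancel (Nat.one_le_of_lt (Multiset.mem_filter.1 hx).2)
  have hparts : ((p.parts.filter (t + 1 ≤ ·)).map (· - 1)).map (· + 1) +
      p.parts.filter (¬ t + 1 ≤ ·) = p.parts := by
    rw [hmap, Multiset.filter_add_not]
  rw [conjPart, Multiset.countP_eq_card_filter] at ht
  refine ⟨⟨(p.parts.filter (t + 1 ≤ ·)).map (· - 1), t, p.parts.filter (¬ t + 1 ≤ ·), ?_, ?_, ?_,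
    ?_, ?_⟩, Nat.Partition.ext hparts⟩
  · rw [Multiset.card_map]
    omega
  · intro a ha
    obtain ⟨b, hb, rfl⟩ := Multiset.mem_map.1 ha
    exact Nat.le_sub_one_of_lt (Multiset.mem_filter.1 hb).2
  · exact fun b hb => Nat.le_of_lt_succ (not_le.1 (Multiset.mem_filter.1 hb).2)
  · exact fun b hb => p.parts_pos (Multiset.mem_filter.1 hb).1
  · have hsum := congrArg Multiset.sum hparts
    simp only [p.parts_sum, Multiset.sum_add, Multiset.sum_map_add, Multiset.map_id',
      Multiset.map_const', Multiset.sum_replicate, smul_eq_mul, mul_one, Multiset.card_map] at hsum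
    omega

end ShiftedSplit

theorem ncard_hasShiftedFixedPoint_add (j n : ℕ) :
    {p : (n + j + 1).Partition | HasShiftedFixedPoint j p}.ncard +
      {p : n.Partition | HasShiftedFixedPoint (j + 1) p}.ncard = Nat.card n.Partition := by
  have hglue : Set.range (ShiftedSplit.glue (j := j) (n := n)) =
      {p | HasShiftedFixedPoint j p} :=
    Set.Subset.antisymm (Set.range_subset_iff.2 ShiftedSplit.hasShiftedFixedPoint_glue)
      fun _ => ShiftedSplit.exists_glue_eq
  have hraise : Set.range (ShiftedSplit.raise (j := j) (n := n)) =
      {p | HasShiftedFixedPoint (j + 1) p}ᶜ :=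
    Set.Subset.antisymm (Set.range_subset_iff.2 ShiftedSplit.not_hasShiftedFixedPoint_raise)
      fun _ => ShiftedSplit.exists_raise_eq
  rw [← hglue, Set.ncard_range_of_injective ShiftedSplit.glue_injective,
    ← Set.ncard_range_of_injective ShiftedSplit.raise_injective, hraise, add_comm,
    Set.ncard_add_ncard_compl]

section AddParts

variable {n N : ℕ} {s : Multiset ℕ}

/-- The partition of `N = n + s.sum` obtained from a partition of `n` by adjoining the elements of
`s` as new parts. -/
def addParts (hpos : ∀ i ∈ s, 0 < i) (hN : n + s.sum = N) (p : n.Partition) : N.Partition where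
  parts := p.parts + s
  parts_pos hi := (Multiset.mem_add.1 hi).elim p.parts_pos (hpos _)
  parts_sum := by rw [Multiset.sum_add, p.parts_sum, hN]

theorem addParts_injective (hpos : ∀ i ∈ s, 0 < i) (hN : n + s.sum = N) :
    Function.Injective (addParts hpos hN) := fun _ _ h =>
  Nat.Partition.ext (add_right_cancel (congrArg Nat.Partition.parts h))

theorem range_addParts (hpos : ∀ i ∈ s, 0 < i) (hN : n + s.sum = N) :
    Set.range (addParts hpos hN) = {p | s ≤ p.parts} := by
  ext p
  constructor
  · rintro ⟨q, rfl⟩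
    exact Multiset.le_add_left _ _
  · intro h
    have hparts : p.parts - s + s = p.parts := Multiset.sub_add_cancel h
    refine ⟨⟨p.parts - s, fun hi => p.parts_pos (Multiset.mem_of_le (Multiset.sub_le_self _ _) hi),
      ?_⟩, Nat.Partition.ext hparts⟩
    apply add_right_cancel (b := s.sum)
    rw [← Multiset.sum_add, hparts, p.parts_sum, hN]

theorem ncard_le_parts (hpos : ∀ i ∈ s, 0 < i) (hN : n + s.sum = N) :
    {p : N.Partition | s ≤ p.parts}.ncard = Nat.card n.Partition := by
  rw [← range_addParts hpos hN, Set.ncard_range_of_injective (addParts_injective hpos hN)]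

theorem sum_le_of_le_parts {p : n.Partition} (h : s ≤ p.parts) : s.sum ≤ n := by
  obtain ⟨u, hu⟩ := Multiset.le_iff_exists_add.1 h
  rw [← p.parts_sum, hu, Multiset.sum_add]
  exact Nat.le_add_right _ _

end AddParts

/-- The parts `1, 2, …, k`; their sum is the `k`-th triangular number. -/
def staircase (k : ℕ) : Multiset ℕ :=
  (Finset.Icc 1 k).val

theorem sum_staircase_succ (k : ℕ) : (staircase (k + 1)).sum = (staircase k).sum + (k + 1) := by
  simp only [staircase, Finset.sum_val]
  exact Finset.sum_Icc_succ_top (Nat.le_add_left 1 k) id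

theorem lt_mex_iff_staircase_le {n : ℕ} (p : n.Partition) (k : ℕ) :
    k < mex p ↔ staircase k ≤ p.parts := by
  have hne : {i : ℕ | 0 < i ∧ i ∉ p.parts}.Nonempty :=
    ⟨n + 1, n.succ_pos, fun h => (Nat.Partition.le_of_mem_parts h).not_gt n.lt_succ_self⟩
  rw [staircase, Multiset.le_iff_subset (Finset.nodup _)]
  constructor
  · intro hk i hi
    obtain ⟨hi, hik⟩ := Finset.mem_Icc.1 (Finset.mem_def.2 hi)
    by_contra hmem
    exact (hik.trans_lt hk).not_ge (Nat.sInf_le ⟨hi, hmem⟩)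
  · intro hsub
    obtain ⟨hpos, hmem⟩ := Nat.sInf_mem hne
    exact not_le.1 fun hle => hmem (hsub (Finset.mem_Icc.2 ⟨hpos, hle⟩))

theorem ncard_lt_mex {n N k : ℕ} (hN : n + (staircase k).sum = N) :
    {p : N.Partition | k < mex p}.ncard = Nat.card n.Partition := by
  simp only [lt_mex_iff_staircase_le]
  exact ncard_le_parts (fun i hi => (Finset.mem_Icc.1 (Finset.mem_def.2 hi)).1) hN

theorem lt_and_even_add_iff {j m : ℕ} : j < m ∧ Even (m + j) ↔ j + 1 < m ∧ Even (m + j) := by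
  grind

theorem ncard_lt_mex_and_even_add (j N : ℕ) :
    {p : N.Partition | j < mex p ∧ Even (mex p + j)}.ncard +
      {p : N.Partition | j + 1 < mex p ∧ Even (mex p + (j + 1))}.ncard =
    {p : N.Partition | j + 1 < mex p}.ncard := by
  have heven : {p : N.Partition | j < mex p ∧ Even (mex p + j)} =
      {p | j + 1 < mex p} ∩ {p | Even (mex p + j)} := by
    ext p
    exact lt_and_even_add_iff
  have hodd : {p : N.Partition | j + 1 < mex p ∧ Even (mex p + (j + 1))} =
      {p | j + 1 < mex p} \ {p | Even (mex p + j)} := by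
    ext p
    simp only [Set.mem_ofPred_eq, Set.mem_sdiff, ← add_assoc, Nat.even_add_one]
  rw [heven, hodd, Set.ncard_inter_add_ncard_sdiff_eq_ncard]

theorem not_lt_mex_and_even_of_le {n N j : ℕ} (h : n ≤ j) (hN : n + (staircase j).sum = N)
    (p : N.Partition) : ¬ (j < mex p ∧ Even (mex p + j)) := by
  intro hmex_even
  have hmex : j + 1 < mex p := (lt_and_even_add_iff.1 hmex_even).1
  have hsum := sum_le_of_le_parts ((lt_mex_iff_staircase_le p _).1 hmex)
  rw [sum_staircase_succ] at hsum
  omega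

theorem ncard_hasShiftedFixedPoint_eq_ncard_lt_mex_and_even {n N j : ℕ}
    (hN : n + (staircase j).sum = N) :
    {p : n.Partition | HasShiftedFixedPoint j p}.ncard =
      {p : N.Partition | j < mex p ∧ Even (mex p + j)}.ncard := by
  induction n using Nat.strong_induction_on generalizing j with
  | _ n ih =>
    rcases le_or_gt n j with h | h
    · simp only [not_hasShiftedFixedPoint_of_le _ h, not_lt_mex_and_even_of_le h hN]
      rw [Set.ofPred_false, Set.ofPred_false, Set.ncard_empty, Set.ncard_empty]
    · obtain ⟨m, rfl⟩ : ∃ m, n = m + j + 1 := ⟨n - j - 1, by omega⟩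
      have hN' : m + (staircase (j + 1)).sum = N := by
        rw [sum_staircase_succ]
        omega
      have hfixed := ncard_hasShiftedFixedPoint_add j m
      have hmex := ncard_lt_mex_and_even_add j N
      rw [ncard_lt_mex hN', ← ih m (by omega) hN'] at hmex
      omega

/-- For `n ≥ 1`, the number of partitions of `n` with a fixed point equals the number
of partitions of `n` whose mex is even. -/
theorem fixed_point_eq_even_mex (n : ℕ) (hn : 1 ≤ n) :
    Nat.card {p : n.Partition // ∃ i, 1 ≤ i ∧ nthPart p i = i} =
      Nat.card {p : n.Partition // Even (mex p)} := by
  have hzero : n + (staircase 0).sum = n := rfl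
  have hmex (p : n.Partition) : 0 < mex p := (lt_mex_iff_staircase_le p 0).2 (Multiset.zero_le _)
  have h := ncard_hasShiftedFixedPoint_eq_ncard_lt_mex_and_even hzero
  simp only [HasShiftedFixedPoint, hmex, true_and, add_zero, ← Nat.card_coe_set_eq] at h
  exact h
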